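/- For every integer Δ ≥ 1, the relative value function is bounded: 0 ≤ V_β(Δ) − V_β(1) ≤ U(Δ) + λ. -/

import Mathlib

/-!
Lower bound: under a common sensing sequence the trajectory from age `1` stays below the one from
`Δ ≥ 1`, so its cost is smaller term by term. Upper bound: from `Δ`, sense at once, paying
`U Δ + lam`, and then follow any sequence `δ` from age `1`; the remaining cost is `β` times the cost
of `δ` from `1`, hence at most that cost.
-/

open scoped ENNReal

/-- Age-of-information trajectory from initial age `Δ₀` under sensing sequence `δ`. -/
def aoiTraj (Δ₀ : ℕ) (δ : ℕ → Bool) : ℕ → ℕ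
  | 0 => Δ₀
  | k + 1 => if δ k then 1 else aoiTraj Δ₀ δ k + 1

/-- β-discounted cost of the sensing sequence `δ` from initial age `Δ₀`,
valued in `[0,∞]`. -/
noncomputable def discCost (β lam : ℝ) (U : ℕ → ℝ) (Δ₀ : ℕ) (δ : ℕ → Bool) : ℝ≥0∞ :=
  ∑' k : ℕ, ENNReal.ofReal (β ^ k * (U (aoiTraj Δ₀ δ k) + lam * (if δ k then 1 else 0)))

/-- Discounted value function: infimum of the discounted cost over all sensing
sequences. -/
noncomputable def valueFn (β lam : ℝ) (U : ℕ → ℝ) (Δ₀ : ℕ) : ℝ≥0∞ :=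
  ⨅ δ : ℕ → Bool, discCost β lam U Δ₀ δ

lemma aoiTraj_mono {a b : ℕ} (h : a ≤ b) (δ : ℕ → Bool) (k : ℕ) :
    aoiTraj a δ k ≤ aoiTraj b δ k := by
  induction k with
  | zero => exact h
  | succ k ih =>
    simp only [aoiTraj]
    split_ifs <;> omega

/-- The sequence that senses at time `0` and then follows `δ`. -/
def senseThen (δ : ℕ → Bool) : ℕ → Bool
  | 0 => true
  | k + 1 => δ k

lemma aoiTraj_senseThen (Δ : ℕ) (δ : ℕ → Bool) (k : ℕ) :
    aoiTraj Δ (senseThen δ) (k + 1) = aoiTraj 1 δ k := by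
  induction k with
  | zero => simp [aoiTraj, senseThen]
  | succ k ih =>
    rw [aoiTraj, ih]
    rfl

theorem relative_value_bounded
    (β lam : ℝ) (hβ : β ∈ Set.Ioo (0 : ℝ) 1) (hlam : 0 ≤ lam)
    (U : ℕ → ℝ) (hU0 : ∀ n, 0 ≤ U n) (hUmono : Monotone U)
    (Δ : ℕ) (hΔ : 1 ≤ Δ) :
    valueFn β lam U 1 ≤ valueFn β lam U Δ ∧
      valueFn β lam U Δ - valueFn β lam U 1 ≤ ENNReal.ofReal (U Δ + lam) := by
  obtain ⟨hβ0, hβ1⟩ := hβ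
  constructor
  · refine iInf_mono fun δ => ENNReal.tsum_le_tsum fun k => ENNReal.ofReal_le_ofReal ?_
    have := hUmono (aoiTraj_mono hΔ δ k)
    gcongr
  · rw [tsub_le_iff_right]
    unfold valueFn
    rw [ENNReal.add_iInf]
    refine le_iInf fun δ => (iInf_le _ (senseThen δ)).trans ?_
    unfold discCost
    rw [tsum_eq_zero_add' ENNReal.summable]
    refine add_le_add (by simp [aoiTraj, senseThen]) (ENNReal.tsum_le_tsum fun k => ?_)
    rw [aoiTraj_senseThen]
    refine ENNReal.ofReal_le_ofReal (mul_le_mul_of_nonneg_right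
      (pow_le_pow_of_le_one hβ0.le hβ1.le k.le_succ) ?_)
    have := hU0 (aoiTraj 1 δ k)
    positivity
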